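/- Let S be an inverse semigroup, X a left involutive semigroup, and f : X → S an étale *-homomorphism. Then the projections of X commute pairwise if and only if f is injective. -/

import Mathlib

/-!
If `f` is injective, projections commute because their images are idempotents of the inverse
semigroup `S`, which commute (`idem_comm`).

Conversely, suppose projections commute and `f x = f y`. The elements `p = x x*` and `q = y y*`
are projections (`isProj_mul_star`) with `f p = f q`. Both `p q` and `p = p p` lie in `p X` and
have the same image, so `p q = p` by étaleness; symmetrically `q p = q`, hence `p = q`. Now
`x = p x` and `y = p y` both lie in `p X` and have the same image, so `x = y`.
-/

/-- `p` is a projection: self-adjoint and idempotent. -/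
def IsProj {X : Type*} [Semigroup X] (st : X → X) (p : X) : Prop :=
  st p = p ∧ p * p = p

/-- A map `f : X → S` is étale if for every `x ∈ X` it induces a bijection
from `xX` onto `f(x)S`. -/
def Etale {X S : Type*} [Semigroup X] [Semigroup S] (f : X → S) : Prop :=
  ∀ x : X, Set.BijOn f {z : X | ∃ w : X, z = x * w} {t : S | ∃ s : S, t = f x * s}

/-- A product of two idempotents is idempotent when inverses are unique: `b (ab)* a` is another
inverse of `ab`, so it equals `(ab)*`, which is therefore idempotent, and hence so is its
inverse `ab`. -/
theorem idem_mul {S : Type*} [Semigroup S] (stS : S → S)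
    (hinv1 : ∀ s, s * stS s * s = s)
    (hinv2 : ∀ s, stS s * s * stS s = stS s)
    (huniq : ∀ s y : S, s * y * s = s → y * s * y = y → y = stS s)
    (a b : S) (ha : a * a = a) (hb : b * b = b) : (a * b) * (a * b) = a * b := by
  have ha' : ∀ z, a * (a * z) = a * z := fun z => by rw [← mul_assoc, ha]
  have hb' : ∀ z, b * (b * z) = b * z := fun z => by rw [← mul_assoc, hb]
  have h1 := hinv1 (a * b)
  have h2 := hinv2 (a * b)
  have h3 := huniq (a * b) (b * stS (a * b) * a)
  generalize stS (a * b) = c at h1 h2 h3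
  have h2' : ∀ z, c * (a * (b * (c * z))) = c * z := fun z => by
    rw [← mul_assoc b, ← mul_assoc a, ← mul_assoc c, ← mul_assoc a, ← mul_assoc, ← mul_assoc]
    rw [← mul_assoc] at h2
    rw [h2]
  simp only [mul_assoc] at h1 h2 h3 ⊢
  have hc : b * (c * a) = c := by
    apply h3
    · simp only [ha', hb', h1]
    · simp only [ha', hb', h2']
  have hcc : c * c = c := by
    calc c * c = (b * (c * a)) * (b * (c * a)) := by rw [hc]
      _ = b * (c * a) := by simp only [mul_assoc, h2']
      _ = c := hc
  -- both `c` and `ab` are inverses of `c`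
  have e1 : c = stS c := huniq c c (by rw [hcc, hcc]) (by rw [hcc, hcc])
  have e2 : a * b = stS c :=
    huniq c (a * b) (by simp only [mul_assoc, h2]) (by simp only [mul_assoc, h1])
  have e3 : a * b = c := e2.trans e1.symm
  rw [← mul_assoc, e3, hcc]

theorem idem_comm {S : Type*} [Semigroup S] (stS : S → S)
    (hinv1 : ∀ s, s * stS s * s = s)
    (hinv2 : ∀ s, stS s * s * stS s = stS s)
    (huniq : ∀ s y : S, s * y * s = s → y * s * y = y → y = stS s)
    (a b : S) (ha : a * a = a) (hb : b * b = b) : a * b = b * a := by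
  have hab := idem_mul stS hinv1 hinv2 huniq a b ha hb
  have hba := idem_mul stS hinv1 hinv2 huniq b a hb ha
  have ha' : ∀ z, a * (a * z) = a * z := fun z => by rw [← mul_assoc, ha]
  have hb' : ∀ z, b * (b * z) = b * z := fun z => by rw [← mul_assoc, hb]
  -- both `ab` and `ba` are inverses of `ab`
  have e1 : a * b = stS (a * b) := huniq _ _ (by rw [hab, hab]) (by rw [hab, hab])
  have e2 : b * a = stS (a * b) := by
    simp only [mul_assoc] at hab hba
    apply huniq
    · simp only [mul_assoc, ha', hb', hab]
    · simp only [mul_assoc, ha', hb', hba]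
  exact e1.trans e2.symm

theorem isProj_mul_star {X : Type*} [Semigroup X] (stX : X → X)
    (hstX : ∀ x, stX (stX x) = x)
    (hpiX : ∀ x, x * stX x * x = x)
    (hleftX : ∀ x y, stX (x * y) = stX (stX x * x * y) * stX x) (x : X) :
    IsProj stX (x * stX x) := by
  constructor
  · have h := hpiX (stX x)
    rw [hstX] at h
    rw [hleftX, h, hstX]
  · rw [← mul_assoc, hpiX]

/-- For an étale `*`-homomorphism `f : X → S` from a left involutive semigroup
`X` to an inverse semigroup `S`: the projections of `X` commute pairwise iff
`f` is injective. -/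
theorem projections_commute_iff_injective
    {X S : Type*} [Semigroup X] [Semigroup S]
    (stX : X → X) (stS : S → S)
    (hstX : ∀ x, stX (stX x) = x)
    (hpiX : ∀ x, x * stX x * x = x)
    (hleftX : ∀ x y, stX (x * y) = stX (stX x * x * y) * stX x)
    (hinv1 : ∀ s, s * stS s * s = s)
    (hinv2 : ∀ s, stS s * s * stS s = stS s)
    (huniq : ∀ s y : S, s * y * s = s → y * s * y = y → y = stS s)
    (f : X → S)
    (hfstar : ∀ x, f (stX x) = stS (f x))
    (hfmul : ∀ x y, f (x * y) = f x * f y)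
    (hetale : Etale f) :
    (∀ p q : X, IsProj stX p → IsProj stX q → p * q = q * p) ↔
      Function.Injective f := by
  constructor
  · intro hcomm x y hxy
    have hpq : ∀ x y, f x = f y → x * stX x * (y * stX y) = x * stX x := by
      intro x y hxy
      have hp := isProj_mul_star stX hstX hpiX hleftX x
      apply (hetale (x * stX x)).injOn ⟨_, rfl⟩ ⟨_, hp.2.symm⟩
      have e : f (y * stX y) = f (x * stX x) := by rw [hfmul, hfmul, hfstar, hfstar, hxy]
      rw [hfmul, e, ← hfmul, hp.2]
    have e : x * stX x = y * stX y := by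
      rw [← hpq x y hxy, hcomm _ _ (isProj_mul_star stX hstX hpiX hleftX x)
        (isProj_mul_star stX hstX hpiX hleftX y), hpq y x hxy.symm]
    exact (hetale (x * stX x)).injOn ⟨x, (hpiX x).symm⟩ ⟨y, by rw [e, hpiX]⟩ hxy
  · intro hinj p q hp hq
    apply hinj
    rw [hfmul, hfmul]
    exact idem_comm stS hinv1 hinv2 huniq _ _ (by rw [← hfmul, hp.2]) (by rw [← hfmul, hq.2])
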